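/- Let V be a finite type and let G and H be simple graphs on V that are fractionally isomorphic, i.e., there exists a doubly stochastic matrix S indexed by V with A_G * S = S * A_H, where A_G, A_H are the real adjacency matrices. Define the fractional domination number γ_f(G) as the infimum (in ℝ) of { t | ∃ x : V → ℝ, (∀ v, 0 ≤ x v) ∧ (∀ v, x v + (∑ over u adjacent to v of x u) ≥ 1) ∧ t = ∑ over v of x v }, and the fractional total domination number Γ_f(G) as the infimum of { t | ∃ x : V → ℝ, (∀ v, 0 ≤ x v) ∧ (∀ v, (∑ over u adjacent to v of x u) ≥ 1) ∧ t = ∑ over v of x v }. Then γ_f(G) = γ_f(H), and if moreover G has no isolated vertices, then Γ_f(G) = Γ_f(H). -/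

import Mathlib

/-!
If `A_G S = S A_H` with `S` doubly stochastic, then `x ↦ S x` maps feasible vectors of the
(total) domination program of `H` to feasible vectors of that of `G`, preserving the total
weight: `A_G S x = S A_H x`, and `S` is monotone, fixes the all-ones vector and preserves
coordinate sums. Since adjacency matrices are symmetric, `Sᵀ` intertwines in the opposite
direction, so the two programs attain exactly the same set of values. Hence their
infima agree.
-/

open Matrix

/-- A real square matrix is doubly stochastic if all its entries are nonnegative and
each of its rows and each of its columns sums to 1. -/
def DoublyStochastic {n : Type*} [Fintype n] (S : Matrix n n ℝ) : Prop :=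
  (∀ i j, 0 ≤ S i j) ∧ (∀ i, ∑ j, S i j = 1) ∧ (∀ j, ∑ i, S i j = 1)

/-- The fractional domination number of a simple graph. -/
noncomputable def fracDominationNumber {V : Type*} [Fintype V]
    (G : SimpleGraph V) [DecidableRel G.Adj] : ℝ :=
  sInf { t : ℝ | ∃ x : V → ℝ, (∀ v, 0 ≤ x v) ∧
    (∀ v : V, 1 ≤ x v + ∑ u, (if G.Adj v u then x u else 0)) ∧
    t = ∑ v, x v }

/-- The fractional total domination number of a simple graph. -/
noncomputable def fracTotalDominationNumber {V : Type*} [Fintype V]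
    (G : SimpleGraph V) [DecidableRel G.Adj] : ℝ :=
  sInf { t : ℝ | ∃ x : V → ℝ, (∀ v, 0 ≤ x v) ∧
    (∀ v : V, 1 ≤ ∑ u, (if G.Adj v u then x u else 0)) ∧
    t = ∑ v, x v }

lemma DoublyStochastic.transpose {V : Type*} [Fintype V] {S : Matrix V V ℝ}
    (hS : DoublyStochastic S) : DoublyStochastic Sᵀ :=
  ⟨fun i j => hS.1 j i, hS.2.2, hS.2.1⟩

lemma DoublyStochastic.mulVec_nonneg {V : Type*} [Fintype V] {S : Matrix V V ℝ}
    (hS : DoublyStochastic S) {x : V → ℝ} (hx : ∀ v, 0 ≤ x v) (v : V) : 0 ≤ (S *ᵥ x) v :=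
  Finset.sum_nonneg fun u _ => mul_nonneg (hS.1 v u) (hx u)

/-- Each coordinate of `S y` is a convex combination of the coordinates of `y`. -/
lemma DoublyStochastic.one_le_mulVec {V : Type*} [Fintype V] {S : Matrix V V ℝ}
    (hS : DoublyStochastic S) {y : V → ℝ} (hy : ∀ v, 1 ≤ y v) (v : V) : 1 ≤ (S *ᵥ y) v := by
  rw [← hS.2.1 v]
  exact Finset.sum_le_sum fun u _ => le_mul_of_one_le_right (hS.1 v u) (hy u)

lemma DoublyStochastic.sum_mulVec {V : Type*} [Fintype V] {S : Matrix V V ℝ}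
    (hS : DoublyStochastic S) (x : V → ℝ) : ∑ v, (S *ᵥ x) v = ∑ v, x v := by
  simp only [mulVec, dotProduct]
  rw [Finset.sum_comm]
  simp_rw [← Finset.sum_mul, hS.2.2, one_mul]

lemma sum_ite_adj_eq_mulVec {V : Type*} [Fintype V] (G : SimpleGraph V) [DecidableRel G.Adj]
    (x : V → ℝ) (v : V) :
    ∑ u, (if G.Adj v u then x u else 0) = (G.adjMatrix ℝ *ᵥ x) v := by
  simp [mulVec, dotProduct, SimpleGraph.adjMatrix_apply]

lemma adjMatrix_transpose_intertwine {V : Type*} [Fintype V]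
    {G H : SimpleGraph V} [DecidableRel G.Adj] [DecidableRel H.Adj] {S : Matrix V V ℝ}
    (hAdj : G.adjMatrix ℝ * S = S * H.adjMatrix ℝ) :
    H.adjMatrix ℝ * Sᵀ = Sᵀ * G.adjMatrix ℝ := by
  simpa [transpose_mul] using (congrArg transpose hAdj).symm

lemma fracDomination_values_subset {V : Type*} [Fintype V]
    (G H : SimpleGraph V) [DecidableRel G.Adj] [DecidableRel H.Adj]
    (S : Matrix V V ℝ) (hS : DoublyStochastic S)
    (hAdj : G.adjMatrix ℝ * S = S * H.adjMatrix ℝ) :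
    { t : ℝ | ∃ x : V → ℝ, (∀ v, 0 ≤ x v) ∧
      (∀ v : V, 1 ≤ x v + ∑ u, (if H.Adj v u then x u else 0)) ∧ t = ∑ v, x v } ⊆
    { t : ℝ | ∃ x : V → ℝ, (∀ v, 0 ≤ x v) ∧
      (∀ v : V, 1 ≤ x v + ∑ u, (if G.Adj v u then x u else 0)) ∧ t = ∑ v, x v } := by
  rintro t ⟨x, h0, h1, rfl⟩
  refine ⟨S *ᵥ x, hS.mulVec_nonneg h0, fun v => ?_, (hS.sum_mulVec x).symm⟩
  simp only [sum_ite_adj_eq_mulVec] at h1 ⊢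
  rw [mulVec_mulVec, hAdj, ← mulVec_mulVec, ← Pi.add_apply, ← mulVec_add]
  exact hS.one_le_mulVec h1 v

lemma fracTotalDomination_values_subset {V : Type*} [Fintype V]
    (G H : SimpleGraph V) [DecidableRel G.Adj] [DecidableRel H.Adj]
    (S : Matrix V V ℝ) (hS : DoublyStochastic S)
    (hAdj : G.adjMatrix ℝ * S = S * H.adjMatrix ℝ) :
    { t : ℝ | ∃ x : V → ℝ, (∀ v, 0 ≤ x v) ∧
      (∀ v : V, 1 ≤ ∑ u, (if H.Adj v u then x u else 0)) ∧ t = ∑ v, x v } ⊆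
    { t : ℝ | ∃ x : V → ℝ, (∀ v, 0 ≤ x v) ∧
      (∀ v : V, 1 ≤ ∑ u, (if G.Adj v u then x u else 0)) ∧ t = ∑ v, x v } := by
  rintro t ⟨x, h0, h1, rfl⟩
  refine ⟨S *ᵥ x, hS.mulVec_nonneg h0, fun v => ?_, (hS.sum_mulVec x).symm⟩
  simp only [sum_ite_adj_eq_mulVec] at h1 ⊢
  rw [mulVec_mulVec, hAdj, ← mulVec_mulVec]
  exact hS.one_le_mulVec h1 v

theorem fracIso_domination_eq {V : Type*} [Fintype V] [DecidableEq V]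
    (G H : SimpleGraph V) [DecidableRel G.Adj] [DecidableRel H.Adj]
    (S : Matrix V V ℝ) (hS : DoublyStochastic S)
    (hAdj : G.adjMatrix ℝ * S = S * H.adjMatrix ℝ) :
    fracDominationNumber G = fracDominationNumber H ∧
    ((∀ v : V, ∃ u, G.Adj v u) →
      fracTotalDominationNumber G = fracTotalDominationNumber H) := by
  have hT := adjMatrix_transpose_intertwine hAdj
  exact ⟨congrArg sInf (Set.Subset.antisymm
      (fracDomination_values_subset H G Sᵀ hS.transpose hT)
      (fracDomination_values_subset G H S hS hAdj)),
    fun _ => congrArg sInf (Set.Subset.antisymm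
      (fracTotalDomination_values_subset H G Sᵀ hS.transpose hT)
      (fracTotalDomination_values_subset G H S hS hAdj))⟩
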